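/- For every STRIPS planning model M over fluents F and labels A and every P ⊆ F: if the projected model f_P(M) is unsolvable (Π_{f_P(M)} = ∅), then M is unsolvable (Π_M = ∅). -/

import Mathlib

/-- A STRIPS planning model over fluents `F` and action labels `A`. -/
structure Strips (F : Type*) (A : Type*) where
  prec : A → Set F
  add : A → Set F
  del : A → Set F
  I : Set F
  G : Set F

/-- Result of applying action `a` in state `S`. -/
def Strips.res {F A : Type*} (M : Strips F A) (a : A) (S : Set F) : Set F :=
  (S \ M.del a) ∪ M.add a

/-- The state trajectory `S₀, S₁, …, Sₙ` of a plan from a state. -/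
def Strips.traj {F A : Type*} (M : Strips F A) : List A → Set F → List (Set F)
  | [], S => [S]
  | a :: π, S => S :: M.traj π (M.res a S)

/-- A plan is executable from `S` if each action's precondition holds when applied. -/
def Strips.exec {F A : Type*} (M : Strips F A) : List A → Set F → Prop
  | [], _ => True
  | a :: π, S => M.prec a ⊆ S ∧ M.exec π (M.res a S)

/-- The final state `Sₙ` of the trajectory of a plan from a state. -/
def Strips.finalState {F A : Type*} (M : Strips F A) (π : List A) (S : Set F) : Set F :=
  π.foldl (fun T a => M.res a T) S

/-- The state `S_k` of the trajectory of a plan from a state. -/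
def Strips.stateAt {F A : Type*} (M : Strips F A) (π : List A) (S : Set F) (k : ℕ) : Set F :=
  M.finalState (π.take k) S

/-- A plan is valid if it is executable from the initial state and achieves the goal. -/
def Strips.Valid {F A : Type*} (M : Strips F A) (π : List A) : Prop :=
  M.exec π M.I ∧ M.G ⊆ M.finalState π M.I

/-- The set `Π_M` of valid plans of `M`. -/
def Strips.Plans {F A : Type*} (M : Strips F A) : Set (List A) :=
  {π | M.Valid π}

/-- The projection `f_P(M)` of a model, projecting out the fluents in `P`. -/
def Strips.proj {F A : Type*} (M : Strips F A) (P : Set F) : Strips F A where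
  prec a := M.prec a \ P
  add a := M.add a \ P
  del a := M.del a \ P
  I := M.I \ P
  G := M.G \ P

/-! Removing the fluents in `P` commutes with applying an action, so running a plan in `f_P(M)`
visits exactly the projections of the states it visits in `M`. Set difference with `P` preserves
the inclusions of preconditions and goal in those states, so every valid plan of `M` is valid for
`f_P(M)`. -/

namespace Strips

variable {F A : Type*} (M : Strips F A) (P : Set F)

theorem res_proj_sdiff (a : A) (S : Set F) : (M.proj P).res a (S \ P) = M.res a S \ P := by
  have sdiff_del : (S \ P) \ (M.del a \ P) = (S \ M.del a) \ P := by
    rw [Set.sdiff_sdiff, Set.union_sdiff_self, Set.union_comm, ← Set.sdiff_sdiff]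
  calc (M.proj P).res a (S \ P)
      = ((S \ P) \ (M.del a \ P)) ∪ (M.add a \ P) := rfl
    _ = ((S \ M.del a) \ P) ∪ (M.add a \ P) := by rw [sdiff_del]
    _ = M.res a S \ P := Set.union_sdiff_distrib.symm

theorem finalState_proj_sdiff (π : List A) (S : Set F) :
    (M.proj P).finalState π (S \ P) = M.finalState π S \ P :=
  List.foldl_hom (· \ P) fun T a => M.res_proj_sdiff P a T

variable {M}

theorem exec.proj_sdiff {π : List A} {S : Set F} (h : M.exec π S) :
    (M.proj P).exec π (S \ P) := by
  induction π generalizing S with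
  | nil => trivial
  | cons a π ih =>
    obtain ⟨prec_subset, exec_tail⟩ := h
    refine ⟨Set.sdiff_subset_sdiff_left prec_subset, ?_⟩
    rw [res_proj_sdiff]
    exact ih exec_tail

theorem Valid.proj {π : List A} (h : M.Valid π) : (M.proj P).Valid π := by
  obtain ⟨exec_init, goal_subset⟩ := h
  refine ⟨exec_init.proj_sdiff P, ?_⟩
  calc M.G \ P ⊆ M.finalState π M.I \ P := Set.sdiff_subset_sdiff_left goal_subset
    _ = (M.proj P).finalState π (M.I \ P) := (M.finalState_proj_sdiff P π M.I).symm

variable (M)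

theorem plans_subset_plans_proj : M.Plans ⊆ (M.proj P).Plans :=
  fun _ hπ => Valid.proj P hπ

end Strips

theorem stmt5 {F A : Type*} (M : Strips F A) (P : Set F)
    (h : (M.proj P).Plans = ∅) : M.Plans = ∅ :=
  Set.subset_eq_empty (M.plans_subset_plans_proj P) h
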